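/- Let n ≥ 2, let E_1, …, E_n be Banach spaces over 𝕂 (= ℝ or ℂ), let A : E_1 × ⋯ × E_n → 𝕂 be a continuous n-linear form, and let A_{n−1} : E_1 × ⋯ × E_{n−1} → E_n' be the associated (n−1)-linear map defined by A_{n−1}(x^1,…,x^{n−1})(x^n) = A(x^1,…,x^n). If E_n' is a GT-space of cotype 2 and A_{n−1} is almost summing, then A is absolutely (1;2,…,2)-summing. -/

import Mathlib

open scoped BigOperators NNReal ENNReal

/-- The weak `ℓ_r` norm of a finite family `(x_j)` in a normed space:
`sup_{‖φ‖ ≤ 1} (∑_j ‖φ(x_j)‖^r)^(1/r)`. -/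
noncomputable def weakNorm (𝕜 : Type*) [RCLike 𝕜] {E : Type*} [NormedAddCommGroup E]
    [NormedSpace 𝕜 E] (r : ℝ) {m : ℕ} (x : Fin m → E) : ℝ :=
  ⨆ φ : {φ : E →L[𝕜] 𝕜 // ‖φ‖ ≤ 1}, (∑ j, ‖φ.1 (x j)‖ ^ r) ^ (1 / r)

/-- The Rademacher norm of a finite family `(x_j)_{j=1}^m` in a normed space:
`(2^{-m} ∑_{ε ∈ {-1,1}^m} ‖∑_j ε_j x_j‖²)^{1/2}`. -/
noncomputable def radNorm {E : Type*} [NormedAddCommGroup E] {m : ℕ} (x : Fin m → E) : ℝ :=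
  ((∑ ε : Fin m → Bool, ‖∑ j, (if ε j then x j else -x j)‖ ^ 2) / (2 : ℝ) ^ m) ^ ((1 : ℝ) / 2)

/-- A Banach space has cotype 2. -/
def HasCotype2 (X : Type*) [NormedAddCommGroup X] : Prop :=
  ∃ C > 0, ∀ (m : ℕ) (x : Fin m → X),
    (∑ j, ‖x j‖ ^ 2) ^ ((1 : ℝ) / 2) ≤ C * radNorm x

/-- A Banach space `X` is a GT-space: every bounded linear operator `X → ℓ₂` is absolutely
`1`-summing. -/
def IsGTSpace (𝕜 : Type*) [RCLike 𝕜] (X : Type*) [NormedAddCommGroup X]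
    [NormedSpace 𝕜 X] : Prop :=
  ∀ u : X →L[𝕜] lp (fun _ : ℕ => 𝕜) 2, ∃ C > 0, ∀ (m : ℕ) (x : Fin m → X),
    ∑ j, ‖u (x j)‖ ≤ C * weakNorm 𝕜 1 x


open MeasureTheory ProbabilityTheory

/-- Squared Rademacher average over an arbitrary finite index type. -/
noncomputable def radSq {X : Type*} [NormedAddCommGroup X] {ι : Type} [Fintype ι] [DecidableEq ι]
    (x : ι → X) : ℝ :=
  (∑ ε : ι → Bool, ‖∑ j, (if ε j then x j else -x j)‖ ^ 2) / (2 : ℝ) ^ Fintype.card ι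

lemma radSq_nonneg {X : Type*} [NormedAddCommGroup X] {ι : Type} [Fintype ι] [DecidableEq ι]
    (x : ι → X) : 0 ≤ radSq x := by
  unfold radSq; positivity

lemma radSq_comp_equiv {X : Type*} [NormedAddCommGroup X] {ι κ : Type} [Fintype ι] [DecidableEq ι] [Fintype κ] [DecidableEq κ]
    (e : κ ≃ ι) (x : ι → X) : radSq (x ∘ e) = radSq x := by
  classical
  unfold radSq
  rw [Fintype.card_congr e]
  congr 1
  refine Fintype.sum_equiv (e.arrowCongr (Equiv.refl Bool)) _ _ fun ε => ?_
  congr 2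
  refine Fintype.sum_equiv e _ _ fun j => ?_
  simp [Equiv.arrowCongr]

lemma radNorm_eq {X : Type*} [NormedAddCommGroup X] {m : ℕ} (x : Fin m → X) :
    radNorm x = Real.sqrt (radSq x) := by
  rw [radNorm, Real.sqrt_eq_rpow, radSq, Fintype.card_fin]

lemma cotype_sq {X : Type*} [NormedAddCommGroup X] (h : HasCotype2 X) :
    ∃ C > 0, ∀ (ι : Type) [Fintype ι] [DecidableEq ι] (x : ι → X), ∑ j, ‖x j‖ ^ 2 ≤ C * radSq x := by
  obtain ⟨C, hC, h⟩ := h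
  refine ⟨C ^ 2, by positivity, fun ι _ _ x => ?_⟩
  have := h _ (x ∘ (Fintype.equivFin ι).symm)
  rw [radNorm_eq, radSq_comp_equiv, ← Real.sqrt_eq_rpow] at this
  have h2 := pow_le_pow_left₀ (Real.sqrt_nonneg _) this 2
  rw [mul_pow, Real.sq_sqrt (by positivity), Real.sq_sqrt (radSq_nonneg _)] at h2
  refine le_trans (le_of_eq ?_) h2
  exact (Fintype.sum_equiv (Fintype.equivFin ι).symm _ _ fun j => rfl).symm

section real
variable {X : Type*} [NormedAddCommGroup X] [NormedSpace ℝ X] {ι : Type} [Fintype ι] [DecidableEq ι]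

lemma radSq_smul_eq (t : ι → ℝ) (x : ι → X) : radSq (fun j => t j • x j) =
    (∑ ε : ι → Bool, ‖∑ j, ((if ε j then 1 else -1) * t j) • x j‖ ^ 2)
      / (2 : ℝ) ^ Fintype.card ι := by
  unfold radSq
  congr 1
  refine Finset.sum_congr rfl fun ε _ => ?_
  congr 2
  refine Finset.sum_congr rfl fun j _ => ?_
  split_ifs <;> simp

lemma radSq_sign (s : ι → Bool) (x : ι → X) :
    radSq (fun j => (if s j then (1 : ℝ) else -1) • x j) = radSq x := by
  classical
  unfold radSq
  congr 1
  let e : (ι → Bool) ≃ (ι → Bool) := Equiv.piCongrRight fun j =>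
    if s j then Equiv.refl Bool else Equiv.boolNot
  refine Fintype.sum_equiv e _ _ fun ε => ?_
  congr 2
  refine Finset.sum_congr rfl fun j _ => ?_
  simp only [e, Equiv.piCongrRight_apply, Pi.map]
  cases hs : s j <;> cases he : ε j <;> simp [Equiv.boolNot]

lemma norm_sq_convexOn (x : ι → X) :
    ConvexOn ℝ Set.univ (fun t : ι → ℝ => ‖∑ j, t j • x j‖ ^ 2) := by
  have h1 : ConvexOn ℝ Set.univ (fun t : ι → ℝ => ‖∑ j, t j • x j‖) := by
    let L : (ι → ℝ) →ₗ[ℝ] X := Fintype.linearCombination ℝ x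
    have := (convexOn_univ_norm (E := X)).comp_linearMap L
    simpa [L, Fintype.linearCombination_apply, Function.comp_def] using this
  exact h1.pow (fun _ _ => norm_nonneg _) 2

lemma radSq_convexOn (x : ι → X) :
    ConvexOn ℝ Set.univ (fun t : ι → ℝ => radSq (fun j => t j • x j)) := by
  refine ⟨convex_univ, fun t _ s _ a b ha hb hab => ?_⟩
  simp only [radSq_smul_eq]
  rw [smul_eq_mul, smul_eq_mul, ← mul_div_assoc, ← mul_div_assoc, ← add_div, Finset.mul_sum,
    Finset.mul_sum, ← Finset.sum_add_distrib]
  gcongr with ε _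
  have := (norm_sq_convexOn (fun j => ((if ε j then (1 : ℝ) else -1)) • x j)).2
    (Set.mem_univ t) (Set.mem_univ s) ha hb hab
  simp only [smul_smul, Pi.add_apply, Pi.smul_apply, smul_eq_mul] at this ⊢
  simpa only [mul_comm (if _ then (1 : ℝ) else -1)] using this

lemma radSq_contraction (t : ι → ℝ) (ht : ∀ j, |t j| ≤ 1) (x : ι → X) :
    radSq (fun j => t j • x j) ≤ radSq x := by
  have hmem : t ∈ convexHull ℝ (Set.univ.pi fun _ : ι => ({-1, 1} : Set ℝ)) := by
    rw [convexHull_pi]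
    intro j _
    rw [convexHull_pair, segment_eq_Icc (by norm_num)]
    exact abs_le.1 (ht j)
  obtain ⟨s, hs, h⟩ := (radSq_convexOn x).exists_ge_of_mem_convexHull (Set.subset_univ _) hmem
  refine h.trans (le_of_eq ?_)
  classical
  rw [← radSq_sign (fun j => decide (s j = 1)) x]
  congr 1
  ext j
  rcases hs j (Set.mem_univ _) with h | h
  · rw [h]; norm_num
  · rw [Set.mem_singleton_iff] at h; rw [h]; norm_num

lemma radSq_mono (s T : ι → ℝ) (h : ∀ j, |s j| ≤ T j) (x : ι → X) :
    radSq (fun j => s j • x j) ≤ radSq (fun j => T j • x j) := by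
  have := radSq_contraction (fun j => s j / T j) (fun j => by
    have hT : 0 ≤ T j := (abs_nonneg _).trans (h j)
    rw [abs_div, abs_of_nonneg hT]; exact div_le_one_of_le₀ (h j) hT) (fun j => T j • x j)
  refine le_trans (le_of_eq ?_) this
  congr 1
  ext j
  rw [smul_smul]
  by_cases hT : T j = 0
  · have := h j; rw [hT] at this
    simp [hT, abs_nonpos_iff.1 this]
  · rw [div_mul_cancel₀ _ hT]

lemma radSq_sum_le (K : ℕ) (t : ℕ → ι → ℝ) (x : ι → X) :
    radSq (fun j => (∑ k ∈ Finset.range K, t k j) • x j) ≤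
      2 * ∑ k ∈ Finset.range K, 2 ^ k * radSq (fun j => t k j • x j) := by
  simp only [radSq_smul_eq]
  simp_rw [← mul_div_assoc]
  rw [← Finset.sum_div, ← mul_div_assoc]
  gcongr
  simp_rw [Finset.mul_sum (s := Finset.univ)]
  rw [Finset.sum_comm, Finset.mul_sum]
  refine Finset.sum_le_sum fun ε _ => ?_
  have e : ∑ j, ((if ε j then (1 : ℝ) else -1) * ∑ k ∈ Finset.range K, t k j) • x j =
      ∑ k ∈ Finset.range K, ∑ j, ((if ε j then (1 : ℝ) else -1) * t k j) • x j := by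
    rw [Finset.sum_comm]
    refine Finset.sum_congr rfl fun j _ => ?_
    rw [Finset.mul_sum, Finset.sum_smul]
  rw [e]
  set a : ℕ → X := fun k => ∑ j, ((if ε j then (1 : ℝ) else -1) * t k j) • x j
  have h1 : ‖∑ k ∈ Finset.range K, a k‖ ^ 2 ≤ (∑ k ∈ Finset.range K, ‖a k‖) ^ 2 := by
    gcongr; exact norm_sum_le _ _
  refine h1.trans ?_
  have h2 := Finset.sum_sq_le_sum_mul_sum_of_sq_eq_mul (Finset.range K)
    (r := fun k => ‖a k‖) (f := fun k => (1 / 2 : ℝ) ^ k) (g := fun k => 2 ^ k * ‖a k‖ ^ 2)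
    (fun _ _ => by positivity) (fun _ _ => by positivity)
    (fun k _ => by rw [← mul_assoc, ← mul_pow]; norm_num)
  refine h2.trans ?_
  gcongr
  exact sum_geometric_two_le K

lemma continuous_radSq (x : ι → X) : Continuous fun t : ι → ℝ => radSq (fun j => t j • x j) := by
  unfold radSq
  simp only [← smul_neg]
  refine Continuous.div_const (continuous_finsetSum _ fun ε _ => ?_) _
  refine (Continuous.norm (continuous_finsetSum _ fun j _ => ?_)).pow 2
  split_ifs <;> fun_prop

end real

/-- standard Gaussian measure on `ι → ℝ` -/
noncomputable def gam (ι : Type) [Fintype ι] : Measure (ι → ℝ) :=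
  Measure.pi fun _ => gaussianReal 0 1

instance (ι : Type) [Fintype ι] : IsProbabilityMeasure (gam ι) := by
  unfold gam; infer_instance

lemma gam_map {ι κ : Type} [Fintype ι] [Fintype κ] [DecidableEq κ] (F : ι → κ → ℝ)
    (hF : ∀ j k, ∑ i, F i j * F i k = if j = k then 1 else 0) :
    (gam ι).map (fun h j => ∑ i, h i * F i j) = gam κ := by
  have hm : Measurable (fun (h : ι → ℝ) j => ∑ i, h i * F i j) := by fun_prop
  have hL : Measurable (WithLp.toLp 2 : (κ → ℝ) → EuclideanSpace ℝ κ) := by fun_prop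
  have hLi : Measurable (WithLp.toLp 2 : (ι → ℝ) → EuclideanSpace ℝ ι) := by fun_prop
  have hL' : Measurable (WithLp.ofLp : EuclideanSpace ℝ κ → (κ → ℝ)) := by fun_prop
  suffices h : ((gam ι).map (fun h j => ∑ i, h i * F i j)).map
      (WithLp.toLp 2 : (κ → ℝ) → EuclideanSpace ℝ κ) = (gam κ).map (WithLp.toLp 2) by
    have := congrArg (fun μ => μ.map (WithLp.ofLp : EuclideanSpace ℝ κ → (κ → ℝ))) h
    simp only at this
    rw [Measure.map_map hL' hL, Measure.map_map hL' hL] at this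
    simpa [Function.comp_def] using this
  have : IsProbabilityMeasure ((gam ι).map (fun h j => ∑ i, h i * F i j)) :=
    Measure.isProbabilityMeasure_map hm.aemeasurable
  have e1 : (gam κ).map (WithLp.toLp 2) = stdGaussian (EuclideanSpace ℝ κ) := map_pi_eq_stdGaussian
  have e2 : (gam ι).map (WithLp.toLp 2) = stdGaussian (EuclideanSpace ℝ ι) := map_pi_eq_stdGaussian
  have : IsProbabilityMeasure (((gam ι).map (fun h j => ∑ i, h i * F i j)).map
      (WithLp.toLp 2 : (κ → ℝ) → EuclideanSpace ℝ κ)) :=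
    Measure.isProbabilityMeasure_map hL.aemeasurable
  rw [e1]
  apply Measure.ext_of_charFun
  ext t
  rw [charFun_stdGaussian, Measure.map_map hL hm, charFun_apply,
    integral_map (hL.comp hm).aemeasurable (by fun_prop)]
  set t' : EuclideanSpace ℝ ι := WithLp.toLp 2 fun i => ∑ j, F i j * t j
  have e3 : charFun ((gam ι).map (WithLp.toLp 2)) t' = Complex.exp (- ‖t'‖ ^ 2 / 2) := by
    rw [e2, charFun_stdGaussian]
  have e4 : ‖t'‖ ^ 2 = ‖t‖ ^ 2 := by
    rw [EuclideanSpace.real_norm_sq_eq, EuclideanSpace.real_norm_sq_eq]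
    simp only [t', pow_two, Finset.sum_mul_sum]
    rw [Finset.sum_comm]
    refine Finset.sum_congr rfl fun j _ => ?_
    rw [Finset.sum_comm]
    have : ∀ k, ∑ i, F i j * t j * (F i k * t k) = (if j = k then 1 else 0) * (t j * t k) := by
      intro k
      rw [← hF j k, Finset.sum_mul]
      exact Finset.sum_congr rfl fun i _ => by ring
    simp [this]
  have e5 : (‖t'‖ : ℂ) ^ 2 = (‖t‖ : ℂ) ^ 2 := by exact_mod_cast e4
  rw [charFun_apply, integral_map hLi.aemeasurable (by fun_prop), e5] at e3
  rw [← e3]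
  congr 1
  ext h
  congr 3
  simp only [Function.comp, PiLp.inner_apply, t', RCLike.inner_apply, conj_trivial]
  simp only [Finset.mul_sum, Finset.sum_mul]
  rw [Finset.sum_comm]
  refine Finset.sum_congr rfl fun i _ => Finset.sum_congr rfl fun j _ => ?_
  ring

lemma gam_lintegral {ι κ : Type} [Fintype ι] [Fintype κ] [DecidableEq κ] (F : ι → κ → ℝ)
    (hF : ∀ j k, ∑ i, F i j * F i k = if j = k then 1 else 0) (f : (κ → ℝ) → ENNReal)
    (hf : Measurable f) :
    ∫⁻ h, f (fun j => ∑ i, h i * F i j) ∂(gam ι) = ∫⁻ g, f g ∂(gam κ) := by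
  rw [← gam_map F hF, lintegral_map hf (by fun_prop)]

lemma gam_eval_sq {ι : Type} [Fintype ι] (i : ι) :
    ∫⁻ h : ι → ℝ, ENNReal.ofReal (h i ^ 2) ∂(gam ι) = 1 := by
  have h1 : (gam ι).map (Function.eval i) = gaussianReal 0 1 :=
    (measurePreserving_eval (fun _ : ι => gaussianReal 0 1) i).map_eq
  have h2 : ∫⁻ h : ι → ℝ, ENNReal.ofReal (h i ^ 2) ∂(gam ι) =
      ∫⁻ x, ENNReal.ofReal (x ^ 2) ∂(gaussianReal 0 1) := by
    rw [← h1, lintegral_map (by fun_prop) (measurable_pi_apply i)]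
  rw [h2, ← ofReal_integral_eq_lintegral_ofReal]
  · have := variance_fun_id_gaussianReal (μ := 0) (v := 1)
    rw [variance_eq_integral (by fun_prop)] at this
    simp only [integral_id_gaussianReal, sub_zero] at this
    rw [this]; simp
  · exact (memLp_id_gaussianReal' 2 (by simp)).integrable_sq
  · exact Filter.Eventually.of_forall fun x => by positivity

section real2
variable {X : Type*} [NormedAddCommGroup X] [NormedSpace ℝ X] {ι : Type} [Fintype ι] [DecidableEq ι]

lemma continuous_normsq (x : ι → X) : Continuous fun h : ι → ℝ => ‖∑ j, h j • x j‖ ^ 2 := by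
  fun_prop

lemma measurable_normsq (x : ι → X) :
    Measurable fun h : ι → ℝ => ENNReal.ofReal (‖∑ j, h j • x j‖ ^ 2) :=
  ENNReal.measurable_ofReal.comp (continuous_normsq x).measurable

lemma measurable_normsq' (c : ι → ℝ) (x : ι → X) :
    Measurable fun h : ι → ℝ => ENNReal.ofReal (‖∑ j, (c j * h j) • x j‖ ^ 2) :=
  ENNReal.measurable_ofReal.comp (by fun_prop : Continuous _).measurable

lemma gam_radSq (x : ι → X) :
    ∫⁻ h, ENNReal.ofReal (radSq fun j => h j • x j) ∂(gam ι) =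
      ∫⁻ h, ENNReal.ofReal (‖∑ j, h j • x j‖ ^ 2) ∂(gam ι) := by
  have h1 : ∀ h : ι → ℝ, ENNReal.ofReal (radSq fun j => h j • x j) =
      ∑ ε : ι → Bool, (ENNReal.ofReal ((2 : ℝ) ^ Fintype.card ι)⁻¹) *
        ENNReal.ofReal (‖∑ j, ((if ε j then 1 else -1) * h j) • x j‖ ^ 2) := by
    intro h
    rw [radSq_smul_eq, div_eq_inv_mul, ENNReal.ofReal_mul (by positivity),
      ENNReal.ofReal_sum_of_nonneg (fun _ _ => by positivity), Finset.mul_sum]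
  have hm : ∀ ε : ι → Bool, Measurable fun h : ι → ℝ =>
      ENNReal.ofReal (‖∑ j, ((if ε j then (1 : ℝ) else -1) * h j) • x j‖ ^ 2) :=
    fun ε => measurable_normsq' (fun j => if ε j then (1 : ℝ) else -1) x
  simp_rw [h1]
  rw [lintegral_finsetSum]
  swap
  · intro ε _
    exact Measurable.const_mul (hm ε) _
  have h2 : ∀ ε : ι → Bool, ∫⁻ h, (ENNReal.ofReal ((2 : ℝ) ^ Fintype.card ι)⁻¹) *
        ENNReal.ofReal (‖∑ j, ((if ε j then 1 else -1) * h j) • x j‖ ^ 2) ∂(gam ι) =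
      (ENNReal.ofReal ((2 : ℝ) ^ Fintype.card ι)⁻¹) *
        ∫⁻ h, ENNReal.ofReal (‖∑ j, h j • x j‖ ^ 2) ∂(gam ι) := by
    intro ε
    rw [lintegral_const_mul _ (hm ε)]
    congr 1
    rw [← gam_lintegral (fun i j : ι => if i = j then (if ε j then (1 : ℝ) else -1) else 0) ?_
      (fun h => ENNReal.ofReal (‖∑ j, h j • x j‖ ^ 2)) (measurable_normsq x)]
    · refine lintegral_congr fun h => ?_
      simp [mul_comm]
    · intro j k
      by_cases hjk : j = k
      · subst hjk; cases h : ε j <;> simp [h]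
      · cases h : ε k <;> simp [h, hjk, Ne.symm hjk]
  simp_rw [h2]
  rw [Finset.sum_const, Finset.card_univ, Fintype.card_fun, Fintype.card_bool, nsmul_eq_mul,
    ← mul_assoc]
  rw [← ENNReal.ofReal_natCast, ← ENNReal.ofReal_mul (by positivity)]
  push_cast
  rw [mul_inv_cancel₀ (by positivity)]
  simp

/-- Gaussian cotype and rotation invariance. -/
lemma gauss_cotype {κ : Type} [Fintype κ] [DecidableEq κ] {C : ℝ} (hC : 0 < C)
    (hcot : ∀ (ι : Type) [Fintype ι] [DecidableEq ι] (x : ι → X), ∑ j, ‖x j‖ ^ 2 ≤ C * radSq x)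
    (F : ι → κ → ℝ) (hF : ∀ j k, ∑ i, F i j * F i k = if j = k then 1 else 0) (y : κ → X) :
    ENNReal.ofReal (∑ i, ‖∑ j, F i j • y j‖ ^ 2) ≤
      ENNReal.ofReal C * ∫⁻ g, ENNReal.ofReal (‖∑ j, g j • y j‖ ^ 2) ∂(gam κ) := by
  set x : ι → X := fun i => ∑ j, F i j • y j with hx
  have h1 : ∫⁻ h, ENNReal.ofReal (∑ i, ‖h i • x i‖ ^ 2) ∂(gam ι) =
      ENNReal.ofReal (∑ i, ‖x i‖ ^ 2) := by
    have : ∀ h : ι → ℝ, ENNReal.ofReal (∑ i, ‖h i • x i‖ ^ 2) =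
        ∑ i, ENNReal.ofReal (h i ^ 2) * ENNReal.ofReal (‖x i‖ ^ 2) := by
      intro h
      rw [ENNReal.ofReal_sum_of_nonneg (fun _ _ => by positivity)]
      refine Finset.sum_congr rfl fun i _ => ?_
      rw [← ENNReal.ofReal_mul (by positivity), norm_smul, mul_pow, Real.norm_eq_abs, sq_abs]
    simp_rw [this]
    rw [lintegral_finsetSum _ (fun ε _ => by fun_prop)]
    simp_rw [lintegral_mul_const' _ _ ENNReal.ofReal_ne_top, gam_eval_sq, one_mul]
    rw [ENNReal.ofReal_sum_of_nonneg (fun _ _ => by positivity)]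
  rw [← h1]
  calc _ ≤ ∫⁻ h, ENNReal.ofReal C * ENNReal.ofReal (radSq fun i => h i • x i) ∂(gam ι) := by
        refine lintegral_mono fun h => ?_
        rw [← ENNReal.ofReal_mul hC.le]
        exact ENNReal.ofReal_le_ofReal (hcot ι _)
    _ = ENNReal.ofReal C * ∫⁻ h, ENNReal.ofReal (‖∑ i, h i • x i‖ ^ 2) ∂(gam ι) := by
        rw [lintegral_const_mul' _ _ ENNReal.ofReal_ne_top, gam_radSq]
    _ = _ := by
        congr 1
        rw [← gam_lintegral F hF (fun h => ENNReal.ofReal (‖∑ j, h j • y j‖ ^ 2)) (measurable_normsq y)]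
        refine lintegral_congr fun h => ?_
        congr 3
        simp only [hx, Finset.smul_sum, Finset.sum_smul, smul_smul]
        rw [Finset.sum_comm]

end real2

section real3
variable {X : Type*} [NormedAddCommGroup X] [NormedSpace ℝ X] {ι : Type} [Fintype ι] [DecidableEq ι]

lemma radSq_eq (x : ι → X) : radSq x =
    (∑ ε : ι → Bool, ‖∑ j, (if ε j then (1 : ℝ) else -1) • x j‖ ^ 2)
      / (2 : ℝ) ^ Fintype.card ι := by
  have := radSq_smul_eq (fun _ => 1) x
  simpa only [one_smul, mul_one] using this

lemma selector_pointwise {C : ℝ} (hC : 0 < C)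
    (hcot : ∀ (ι : Type) [Fintype ι] [DecidableEq ι] (x : ι → X), ∑ j, ‖x j‖ ^ 2 ≤ C * radSq x)
    (N : ℕ) (c : ι → ℕ) (y : ι → X) :
    ∑ k : Fin N, radSq (fun j => (if c j = (k : ℕ) then (1 : ℝ) else 0) • y j) ≤ C * radSq y := by
  have key : ∀ ε' : Fin N → Bool,
      (∑ ε : ι → Bool, ‖∑ k : Fin N, (if ε' k then (1 : ℝ) else -1) •
        ∑ j, ((if ε j then (1 : ℝ) else -1) * (if c j = (k : ℕ) then (1 : ℝ) else 0)) • y j‖ ^ 2)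
        / (2 : ℝ) ^ Fintype.card ι ≤ radSq y := by
    intro ε'
    set t : ι → ℝ := fun j => ∑ k : Fin N, if c j = (k : ℕ) then (if ε' k then (1 : ℝ) else -1) else 0
      with ht
    have ht1 : ∀ j, |t j| ≤ 1 := by
      intro j
      simp only [ht]
      by_cases hj : c j < N
      · rw [Finset.sum_eq_single (⟨c j, hj⟩ : Fin N)]
        · simp only [if_true]
          split_ifs <;> simp
        · intro b _ hb
          rw [if_neg]
          intro h; exact hb (Fin.ext h.symm)
        · simp
      · rw [Finset.sum_eq_zero]
        · simp
        · intro k _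
          rw [if_neg]
          intro h; exact hj (h ▸ k.2)
    refine le_trans (le_of_eq ?_) (radSq_contraction t ht1 y)
    rw [radSq_smul_eq]
    congr 1
    refine Finset.sum_congr rfl fun ε _ => ?_
    congr 2
    simp only [Finset.smul_sum, smul_smul]
    rw [Finset.sum_comm]
    refine Finset.sum_congr rfl fun j _ => ?_
    rw [← Finset.sum_smul]
    congr 1
    simp only [ht, Finset.mul_sum]
    refine Finset.sum_congr rfl fun k _ => ?_
    split_ifs <;> simp
  simp only [radSq_smul_eq]
  rw [← Finset.sum_div, Finset.sum_comm]
  have h1 : ∀ ε : ι → Bool, ∑ k : Fin N, ‖∑ j, ((if ε j then (1 : ℝ) else -1) *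
      (if c j = (k : ℕ) then (1 : ℝ) else 0)) • y j‖ ^ 2 ≤ C * ((∑ ε' : Fin N → Bool,
        ‖∑ k : Fin N, (if ε' k then (1 : ℝ) else -1) •
        ∑ j, ((if ε j then (1 : ℝ) else -1) * (if c j = (k : ℕ) then (1 : ℝ) else 0)) • y j‖ ^ 2)
        / (2 : ℝ) ^ Fintype.card (Fin N)) := by
    intro ε
    refine (hcot (Fin N) _).trans (le_of_eq ?_)
    rw [radSq_eq]
  calc _ ≤ (∑ ε : ι → Bool, C * ((∑ ε' : Fin N → Bool,
        ‖∑ k : Fin N, (if ε' k then (1 : ℝ) else -1) •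
        ∑ j, ((if ε j then (1 : ℝ) else -1) * (if c j = (k : ℕ) then (1 : ℝ) else 0)) • y j‖ ^ 2)
        / (2 : ℝ) ^ Fintype.card (Fin N))) / (2 : ℝ) ^ Fintype.card ι := by
        gcongr with ε _
        exact h1 ε
    _ = C * ((∑ ε' : Fin N → Bool, (∑ ε : ι → Bool,
        ‖∑ k : Fin N, (if ε' k then (1 : ℝ) else -1) •
        ∑ j, ((if ε j then (1 : ℝ) else -1) * (if c j = (k : ℕ) then (1 : ℝ) else 0)) • y j‖ ^ 2)
        / (2 : ℝ) ^ Fintype.card ι) / (2 : ℝ) ^ Fintype.card (Fin N)) := by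
        rw [← Finset.mul_sum, ← Finset.sum_div, ← Finset.sum_div, Finset.sum_comm]
        ring
    _ ≤ C * ((∑ ε' : Fin N → Bool, radSq y) / (2 : ℝ) ^ Fintype.card (Fin N)) := by
        gcongr with ε' _
        exact key ε'
    _ = C * radSq y := by
        rw [Finset.sum_const, Finset.card_univ, Fintype.card_fun, Fintype.card_bool, nsmul_eq_mul]
        push_cast
        field_simp

lemma map_decide_eq {α β : Type} [MeasurableSpace α] [MeasurableSpace β] (μ : Measure α)
    (ν : Measure β) [IsProbabilityMeasure μ] [IsProbabilityMeasure ν] (f : α → Bool) (g : β → Bool)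
    (hf : Measurable f) (hg : Measurable g) (h : μ (f ⁻¹' {true}) = ν (g ⁻¹' {true})) :
    μ.map f = ν.map g := by
  have hft : ∀ (h : α → Bool), h ⁻¹' {false} = (h ⁻¹' {true})ᶜ := by intro h; ext; simp
  have hgt : ∀ (h : β → Bool), h ⁻¹' {false} = (h ⁻¹' {true})ᶜ := by intro h; ext; simp
  refine Measure.ext_of_singleton fun b => ?_
  rw [Measure.map_apply hf (measurableSet_singleton _), Measure.map_apply hg (measurableSet_singleton _)]
  cases b
  · rw [hft, hgt, prob_compl_eq_one_sub (hf (measurableSet_singleton _)),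
      prob_compl_eq_one_sub (hg (measurableSet_singleton _)), h]
  · exact h

lemma lintegral_pi_bool {α β : Type} [MeasurableSpace α] [MeasurableSpace β] (μ : Measure α)
    (ν : Measure β) [IsProbabilityMeasure μ] [IsProbabilityMeasure ν] (f : α → Bool) (g : β → Bool)
    (hf : Measurable f) (hg : Measurable g) (h : μ (f ⁻¹' {true}) = ν (g ⁻¹' {true}))
    (Ψ : (ι → Bool) → ENNReal) :
    ∫⁻ x, Ψ (fun j => f (x j)) ∂(Measure.pi fun _ : ι => μ) =
      ∫⁻ x, Ψ (fun j => g (x j)) ∂(Measure.pi fun _ : ι => ν) := by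
  have e := map_decide_eq μ ν f g hf hg h
  have hΨ : Measurable Ψ := measurable_of_finite Ψ
  have : IsProbabilityMeasure (μ.map f) := Measure.isProbabilityMeasure_map hf.aemeasurable
  have : IsProbabilityMeasure (ν.map g) := Measure.isProbabilityMeasure_map hg.aemeasurable
  have h1 := Measure.pi_map_pi (μ := fun _ : ι => μ) (f := fun _ => f) (fun _ => hf.aemeasurable)
  have h2 := Measure.pi_map_pi (μ := fun _ : ι => ν) (f := fun _ => g) (fun _ => hg.aemeasurable)
  rw [← lintegral_map (f := Ψ) (g := fun (x : ι → α) j => f (x j)) hΨ (by fun_prop),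
    ← lintegral_map (f := Ψ) (g := fun (x : ι → β) j => g (x j)) hΨ (by fun_prop), h1, h2, e]

/-- colour distribution -/
noncomputable def colour (N : ℕ) (p : ENNReal) : Measure ℕ :=
  (∑ k ∈ Finset.range N, p • Measure.dirac k) + (1 - N * p) • Measure.dirac N

lemma colour_prob (N : ℕ) (p : ENNReal) (h : N * p ≤ 1) : IsProbabilityMeasure (colour N p) := by
  constructor
  simp [colour, h]

lemma colour_apply (N : ℕ) (p : ENNReal) (k : Fin N) : colour N p {(k : ℕ)} = p := by
  have h : ¬ ((N : ℕ) = (k : ℕ)) := by have := k.2; omega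
  simp [colour, Set.indicator_apply, h]

lemma selector {C : ℝ} (hC : 0 < C)
    (hcot : ∀ (ι : Type) [Fintype ι] [DecidableEq ι] (x : ι → X), ∑ j, ‖x j‖ ^ 2 ≤ C * radSq x)
    (y : ι → X) (N : ℕ) (f : ℝ → Bool) (hf : Measurable f)
    (hN : N * gaussianReal 0 1 (f ⁻¹' {true}) ≤ 1) :
    N * ∫⁻ g, ENNReal.ofReal (radSq fun j => (if f (g j) then (1 : ℝ) else 0) • y j) ∂(gam ι) ≤
      ENNReal.ofReal (C * radSq y) := by
  set p := gaussianReal 0 1 (f ⁻¹' {true}) with hp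
  have := colour_prob N p hN
  have h1 : ∀ k : Fin N, ∫⁻ g, ENNReal.ofReal
        (radSq fun j => (if f (g j) then (1 : ℝ) else 0) • y j) ∂(gam ι) =
      ∫⁻ c : ι → ℕ, ENNReal.ofReal
        (radSq fun j => (if c j = (k : ℕ) then (1 : ℝ) else 0) • y j)
          ∂(Measure.pi fun _ : ι => colour N p) := by
    intro k
    have := lintegral_pi_bool (ι := ι) (gaussianReal 0 1) (colour N p) f
      (fun c => decide (c = (k : ℕ))) hf (by fun_prop)
      (by
        have e : (fun c : ℕ => decide (c = (k : ℕ))) ⁻¹' {true} = {(k : ℕ)} := by ext c; simp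
        rw [← hp, e, colour_apply N p k])
      (fun b => ENNReal.ofReal (radSq fun j => (if b j then (1 : ℝ) else 0) • y j))
    simpa [gam] using this
  calc _ = ∑ k : Fin N, ∫⁻ g, ENNReal.ofReal
        (radSq fun j => (if f (g j) then (1 : ℝ) else 0) • y j) ∂(gam ι) := by
        simp
    _ = ∑ k : Fin N, ∫⁻ c : ι → ℕ, ENNReal.ofReal
        (radSq fun j => (if c j = (k : ℕ) then (1 : ℝ) else 0) • y j)
          ∂(Measure.pi fun _ : ι => colour N p) := Finset.sum_congr rfl fun k _ => h1 k
    _ = ∫⁻ c : ι → ℕ, ∑ k : Fin N, ENNReal.ofReal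
        (radSq fun j => (if c j = (k : ℕ) then (1 : ℝ) else 0) • y j)
          ∂(Measure.pi fun _ : ι => colour N p) := by
        rw [lintegral_finsetSum]
        intro k _
        exact Measurable.of_discrete
    _ ≤ ∫⁻ c : ι → ℕ, ENNReal.ofReal (C * radSq y) ∂(Measure.pi fun _ : ι => colour N p) := by
        refine lintegral_mono fun c => ?_
        rw [← ENNReal.ofReal_sum_of_nonneg (fun _ _ => radSq_nonneg _)]
        exact ENNReal.ofReal_le_ofReal (selector_pointwise hC hcot N c y)
    _ = _ := by simp

end real3

section real4
variable {X : Type*} [NormedAddCommGroup X] [NormedSpace ℝ X] {ι : Type} [Fintype ι] [DecidableEq ι]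

lemma gauss_tail (k : ℕ) :
    ((4 ^ (k - 2) : ℕ) : ENNReal) * gaussianReal 0 1 {x : ℝ | (k : ℝ) < |x|} ≤ 1 := by
  rcases lt_or_ge k 2 with hk | hk
  · have : k - 2 = 0 := by omega
    rw [this]; simpa using prob_le_one
  have h1 : (gaussianReal 0 1).real {x : ℝ | (k : ℝ) ≤ id x} ≤ Real.exp (-2 * k) * Real.exp 2 := by
    have := measure_ge_le_exp_mul_mgf (μ := gaussianReal 0 1) (X := id) (t := 2) (k : ℝ) (by norm_num)
      (by simpa using integrable_exp_mul_gaussianReal 2)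
    rw [mgf_id_gaussianReal] at this
    norm_num at this ⊢
    exact this
  have h2 : (gaussianReal 0 1).real {x : ℝ | id x ≤ -(k : ℝ)} ≤ Real.exp (-2 * k) * Real.exp 2 := by
    have := measure_le_le_exp_mul_mgf (μ := gaussianReal 0 1) (X := id) (t := -2) (-(k : ℝ)) (by norm_num)
      (by simpa using integrable_exp_mul_gaussianReal (-2))
    rw [mgf_id_gaussianReal] at this
    norm_num at this ⊢
    exact this
  have h3 : (gaussianReal 0 1).real {x : ℝ | (k : ℝ) < |x|} ≤ 2 * (Real.exp (-2 * k) * Real.exp 2) := by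
    have hs : {x : ℝ | (k : ℝ) < |x|} ⊆ {x : ℝ | (k : ℝ) ≤ id x} ∪ {x : ℝ | id x ≤ -(k : ℝ)} := by
      intro x hx
      rcases lt_abs.1 (show (k : ℝ) < |x| from hx) with h | h
      · left; exact h.le
      · right; simp only [Set.mem_setOf_eq, id]; linarith
    have := (measureReal_mono (μ := gaussianReal 0 1) hs).trans (measureReal_union_le _ _)
    linarith
  obtain ⟨l, rfl⟩ := Nat.exists_eq_add_of_le hk
  have h4 : Real.exp (-2 * ((2 + l : ℕ) : ℝ)) * Real.exp 2 ≤ (1 / 4) ^ (l + 1) := by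
    rw [← Real.exp_add]
    have e : -2 * ((2 + l : ℕ) : ℝ) + 2 = ((l + 1 : ℕ) : ℝ) * (-2) := by push_cast; ring
    rw [e, Real.exp_nat_mul]
    gcongr
    rw [Real.exp_neg, show (2 : ℝ) = 1 + 1 by norm_num, Real.exp_add]
    have := Real.exp_one_gt_d9
    rw [inv_le_comm₀ (by positivity) (by norm_num)]
    nlinarith
  have h5 : (gaussianReal 0 1).real {x : ℝ | ((2 + l : ℕ) : ℝ) < |x|} ≤ (1 / 4) ^ l := by
    refine h3.trans ?_
    have : (0 : ℝ) < (1 / 4) ^ l := by positivity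
    rw [pow_succ] at h4
    linarith
  have h6 : gaussianReal 0 1 {x : ℝ | ((2 + l : ℕ) : ℝ) < |x|} ≤ ENNReal.ofReal ((1 / 4) ^ l) := by
    rw [← ofReal_measureReal]
    exact ENNReal.ofReal_le_ofReal h5
  calc _ ≤ ((4 ^ (2 + l - 2) : ℕ) : ENNReal) * ENNReal.ofReal ((1 / 4) ^ l) := by gcongr
    _ = 1 := by
      rw [← ENNReal.ofReal_natCast, ← ENNReal.ofReal_mul (by positivity)]
      push_cast
      rw [show 2 + l - 2 = l by omega, ← mul_pow]
      norm_num

lemma count_ge (a : ℝ) (K : ℕ) :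
    min a K ≤ ∑ k ∈ Finset.range K, (if decide ((k : ℝ) < a) then (1 : ℝ) else 0) := by
  induction K with
  | zero => simp
  | succ K ih =>
    rw [Finset.sum_range_succ]
    push_cast
    by_cases h : (K : ℝ) < a
    · simp only [h, decide_true, if_true]
      rw [min_eq_right h.le] at ih
      exact (min_le_right _ _).trans (by linarith)
    · simp only [h, decide_false]
      push Not at h
      rw [min_eq_left h] at ih
      exact (min_le_left _ _).trans (by simpa using ih)

lemma gauss_le_rad {C : ℝ} (hC : 0 < C)
    (hcot : ∀ (ι : Type) [Fintype ι] [DecidableEq ι] (x : ι → X), ∑ j, ‖x j‖ ^ 2 ≤ C * radSq x)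
    (y : ι → X) :
    ∫⁻ g, ENNReal.ofReal (‖∑ j, g j • y j‖ ^ 2) ∂(gam ι) ≤ ENNReal.ofReal (64 * (C * radSq y)) := by
  rw [← gam_radSq]
  set f : ℕ → ℝ → Bool := fun k x => decide ((k : ℝ) < |x|) with hf
  have hfm : ∀ k, Measurable (f k) := by
    intro k
    refine measurable_to_bool ?_
    have : f k ⁻¹' {true} = {x : ℝ | (k : ℝ) < |x|} := by ext; simp [hf]
    rw [this]
    exact measurableSet_lt measurable_const (by fun_prop)
  have hN : ∀ k, ((4 ^ (k - 2) : ℕ) : ENNReal) * gaussianReal 0 1 (f k ⁻¹' {true}) ≤ 1 := by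
    intro k
    have : f k ⁻¹' {true} = {x : ℝ | (k : ℝ) < |x|} := by ext; simp [hf]
    rw [this]
    exact gauss_tail k
  have hmeas : ∀ k, Measurable fun g : ι → ℝ => ENNReal.ofReal
      (radSq fun j => (if f k (g j) then (1 : ℝ) else 0) • y j) := by
    intro k
    refine ENNReal.measurable_ofReal.comp ?_
    refine (continuous_radSq y).measurable.comp (g := fun t : ι → ℝ => radSq fun j => t j • y j)
      (f := fun g : ι → ℝ => fun j => if f k (g j) then (1 : ℝ) else 0) ?_
    refine measurable_pi_lambda _ fun j => ?_
    have : Measurable fun b : Bool => if b then (1 : ℝ) else 0 := measurable_of_finite _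
    exact this.comp ((hfm k).comp (measurable_pi_apply j))
  have hpt : ∀ g : ι → ℝ, ENNReal.ofReal (radSq fun j => g j • y j) ≤
      ∑' k : ℕ, ENNReal.ofReal (2 * 2 ^ k) *
        ENNReal.ofReal (radSq fun j => (if f k (g j) then (1 : ℝ) else 0) • y j) := by
    intro g
    obtain ⟨K, hK⟩ := exists_nat_ge (∑ j, |g j|)
    have hK' : ∀ j, |g j| ≤ K := fun j =>
      (Finset.single_le_sum (f := fun j => |g j|) (fun _ _ => abs_nonneg _)
        (Finset.mem_univ j)).trans hK
    have h1 := (radSq_mono g (fun j => ∑ k ∈ Finset.range K, if f k (g j) then (1 : ℝ) else 0)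
      (fun j => by
        have := count_ge |g j| K
        rw [min_eq_left (hK' j)] at this
        exact this) y).trans (radSq_sum_le K _ y)
    refine (ENNReal.ofReal_le_ofReal h1).trans ?_
    refine le_trans (le_of_eq ?_) (ENNReal.sum_le_tsum (Finset.range K))
    rw [Finset.mul_sum, ENNReal.ofReal_sum_of_nonneg]
    · refine Finset.sum_congr rfl fun k _ => ?_
      rw [← ENNReal.ofReal_mul (by positivity), mul_assoc]
    · intro k _
      have := radSq_nonneg (fun j => (if f k (g j) then (1 : ℝ) else 0) • y j)
      positivity
  have hR := radSq_nonneg y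
  have hterm : ∀ k : ℕ, ENNReal.ofReal (2 * 2 ^ k) * ∫⁻ g, ENNReal.ofReal
      (radSq fun j => (if f k (g j) then (1 : ℝ) else 0) • y j) ∂(gam ι) ≤
      ENNReal.ofReal ((32 * (C * radSq y)) * (1 / 2) ^ k) := by
    intro k
    have h := selector hC hcot y (4 ^ (k - 2)) (f k) (hfm k) (hN k)
    set I := ∫⁻ g, ENNReal.ofReal
      (radSq fun j => (if f k (g j) then (1 : ℝ) else 0) • y j) ∂(gam ι)
    have h2 : ENNReal.ofReal (2 * 2 ^ k) ≤
        ENNReal.ofReal (32 * (1 / 2) ^ k) * ((4 ^ (k - 2) : ℕ) : ENNReal) := by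
      rw [← ENNReal.ofReal_natCast, ← ENNReal.ofReal_mul (by positivity)]
      apply ENNReal.ofReal_le_ofReal
      have h3 : (4 : ℝ) ^ k ≤ 16 * 4 ^ (k - 2) := by
        have : (4 : ℝ) ^ k ≤ 4 ^ ((k - 2) + 2) := by
          apply pow_le_pow_right₀ (by norm_num); omega
        rw [pow_add] at this; linarith
      have h4 : (2 : ℝ) ^ k = (1 / 2) ^ k * 4 ^ k := by rw [← mul_pow]; norm_num
      push_cast
      have h5 : (0 : ℝ) < (1 / 2) ^ k := by positivity
      rw [h4]
      nlinarith
    calc _ ≤ (ENNReal.ofReal (32 * (1 / 2) ^ k) * ((4 ^ (k - 2) : ℕ) : ENNReal)) * I := by gcongr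
      _ = ENNReal.ofReal (32 * (1 / 2) ^ k) * (((4 ^ (k - 2) : ℕ) : ENNReal) * I) := mul_assoc _ _ _
      _ ≤ ENNReal.ofReal (32 * (1 / 2) ^ k) * ENNReal.ofReal (C * radSq y) := by gcongr
      _ = _ := by
        rw [← ENNReal.ofReal_mul (by positivity)]
        congr 1; ring
  calc _ ≤ ∫⁻ g, ∑' k : ℕ, ENNReal.ofReal (2 * 2 ^ k) *
        ENNReal.ofReal (radSq fun j => (if f k (g j) then (1 : ℝ) else 0) • y j) ∂(gam ι) :=
        lintegral_mono hpt
    _ = ∑' k : ℕ, ENNReal.ofReal (2 * 2 ^ k) * ∫⁻ g,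
        ENNReal.ofReal (radSq fun j => (if f k (g j) then (1 : ℝ) else 0) • y j) ∂(gam ι) := by
        rw [lintegral_tsum]
        · congr 1; ext k
          rw [lintegral_const_mul _ (hmeas k)]
        · intro k
          exact (Measurable.const_mul (hmeas k) _).aemeasurable
    _ ≤ ∑' k : ℕ, ENNReal.ofReal ((32 * (C * radSq y)) * (1 / 2) ^ k) :=
        ENNReal.tsum_le_tsum hterm
    _ = _ := by
        rw [← ENNReal.ofReal_tsum_of_nonneg (fun _ => by positivity)
          (summable_geometric_two.mul_left _), tsum_mul_left, tsum_geometric_two]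
        congr 1; ring

/-- The `2`-summing estimate for tight frames. -/
lemma frame_bound {κ : Type} [Fintype κ] [DecidableEq κ] {C : ℝ} (hC : 0 < C)
    (hcot : ∀ (ι : Type) [Fintype ι] [DecidableEq ι] (x : ι → X), ∑ j, ‖x j‖ ^ 2 ≤ C * radSq x)
    (F : ι → κ → ℝ) (hF : ∀ j k, ∑ i, F i j * F i k = if j = k then 1 else 0) (y : κ → X) :
    ∑ i, ‖∑ j, F i j • y j‖ ^ 2 ≤ 64 * C ^ 2 * radSq y := by
  have hR := radSq_nonneg y
  have h := (gauss_cotype hC hcot F hF y).trans (mul_le_mul_right (gauss_le_rad hC hcot y) _)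
  rw [← ENNReal.ofReal_mul hC.le, ENNReal.ofReal_le_ofReal_iff (by positivity)] at h
  linarith

end real4

lemma spectral_real {m : ℕ} (Q : Matrix (Fin m) (Fin m) ℝ) (hQ : ∀ j k, Q j k = Q k j) :
    ∃ (f : Fin m → Fin m → ℝ) (q : Fin m → ℝ),
      (∀ j k, ∑ i, f i j * f i k = if j = k then 1 else 0) ∧
      (∀ i i', ∑ j, f i j * f i' j = if i = i' then 1 else 0) ∧
      ∀ j k, Q j k = ∑ i, q i * (f i j * f i k) := by
  have hA : Q.IsHermitian := by
    ext j k
    simp [Matrix.conjTranspose_apply, hQ k j]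
  set U : Matrix (Fin m) (Fin m) ℝ := (hA.eigenvectorUnitary : Matrix (Fin m) (Fin m) ℝ) with hU
  have h1 : U * star U = 1 := Unitary.coe_mul_star_self hA.eigenvectorUnitary
  have h2 : star U * U = 1 := Unitary.coe_star_mul_self hA.eigenvectorUnitary
  have h3 : Q = U * Matrix.diagonal hA.eigenvalues * star U := by
    have := hA.spectral_theorem
    rw [Unitary.conjStarAlgAut_apply] at this
    exact this
  refine ⟨fun i j => U j i, hA.eigenvalues, ?_, ?_, ?_⟩
  · intro j k
    have := congrFun (congrFun h1 j) k
    rw [Matrix.mul_apply, Matrix.one_apply] at this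
    simpa [Matrix.star_apply] using this
  · intro j k
    have := congrFun (congrFun h2 j) k
    rw [Matrix.mul_apply, Matrix.one_apply] at this
    simpa [Matrix.star_apply] using this
  · intro j k
    have := congrFun (congrFun h3 j) k
    rw [this, Matrix.mul_apply]
    refine Finset.sum_congr rfl fun i _ => ?_
    rw [Matrix.mul_diagonal, Matrix.star_apply]
    simp only [star_trivial]
    ring

lemma spectral_form {m : ℕ} (Q : Matrix (Fin m) (Fin m) ℝ) (f : Fin m → Fin m → ℝ)
    (q : Fin m → ℝ) (hQ : ∀ j k, Q j k = ∑ i, q i * (f i j * f i k)) (w : Fin m → ℝ) :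
    ∑ j, ∑ k, w j * Q j k * w k = ∑ i, q i * (∑ j, f i j * w j) ^ 2 := by
  simp_rw [hQ, sq, Finset.sum_mul_sum, Finset.mul_sum, Finset.sum_mul]
  rw [Finset.sum_comm]
  conv_rhs => rw [Finset.sum_comm]
  rw [Finset.sum_comm]
  refine Finset.sum_congr rfl fun j _ => ?_
  rw [Finset.sum_comm]
  refine Finset.sum_congr rfl fun k _ => Finset.sum_congr rfl fun i _ => ?_
  ring

lemma psd_decomp {m : ℕ} (M : Matrix (Fin m) (Fin m) ℝ) (hM : ∀ j k, M j k = M k j)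
    (hpos : ∀ w : Fin m → ℝ, 0 ≤ ∑ j, ∑ k, w j * M j k * w k) :
    ∃ B : Fin m → Fin m → ℝ, ∀ j k, M j k = ∑ i, B i j * B i k := by
  obtain ⟨f, q, hc, hr, hq⟩ := spectral_real M hM
  have hq0 : ∀ i, 0 ≤ q i := by
    intro i
    have := hpos (f i)
    rw [spectral_form M f q hq] at this
    simpa [hr] using this
  refine ⟨fun i j => Real.sqrt (q i) * f i j, fun j k => ?_⟩
  rw [hq]
  refine Finset.sum_congr rfl fun i _ => ?_
  have := Real.mul_self_sqrt (hq0 i)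
  linear_combination (-(f i j * f i k)) * this

lemma quad_lower {m : ℕ} (hm : 0 < m) (d : Fin m → Fin m → ℝ)
    (hd : ∀ j k, |d j k - (if j = k then 1 else 0)| ≤ 1 / (2 * m)) (w : Fin m → ℝ) :
    (1 / 2) * ∑ j, w j ^ 2 ≤ ∑ j, ∑ k, w j * d j k * w k := by
  have h1 : ∀ j k, (if j = k then w j ^ 2 else 0) - (1 / (2 * m)) * (|w j| * |w k|)
      ≤ w j * d j k * w k := by
    intro j k
    have h2 : |w j * (d j k - (if j = k then 1 else 0)) * w k| ≤ (1 / (2 * m)) * (|w j| * |w k|) := by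
      rw [abs_mul, abs_mul]
      have := mul_le_mul_of_nonneg_right (hd j k) (mul_nonneg (abs_nonneg (w j)) (abs_nonneg (w k)))
      linarith
    have h3 := (abs_le.1 h2).1
    split_ifs with h
    · subst h
      simp only [if_true] at h3
      linarith
    · simp only [h, if_false] at h3
      linarith
  have h4 := Finset.sum_le_sum fun j (_ : j ∈ Finset.univ) =>
    Finset.sum_le_sum fun k (_ : k ∈ Finset.univ) => h1 j k
  simp only [Finset.sum_sub_distrib, Finset.sum_ite_eq, Finset.mem_univ, if_true,
    ← Finset.mul_sum] at h4
  rw [← Finset.sum_mul, ← sq] at h4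
  have h5 : (∑ j, |w j|) ^ 2 ≤ m * ∑ j, w j ^ 2 := by
    have := sq_sum_le_card_mul_sum_sq (s := Finset.univ) (f := fun j => |w j|)
    simpa using this
  have hm' : (0 : ℝ) < m := by exact_mod_cast hm
  have h6 : (1 / (2 * (m : ℝ))) * (∑ j, |w j|) ^ 2 ≤ (1 / 2) * ∑ j, w j ^ 2 := by
    calc _ ≤ (1 / (2 * (m : ℝ))) * (m * ∑ j, w j ^ 2) := by gcongr
      _ = _ := by field_simp
  linarith

section real5
variable {X : Type*} [NormedAddCommGroup X] [NormedSpace ℝ X]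

noncomputable def tmap {m : ℕ} (κ : ℝ) (y : Fin m → X) (w : Fin m → ℝ) : Fin m → Fin m → ℝ :=
  fun j k => (if j = k then ‖∑ l, w l • y l‖ ^ 2 / κ else 0) - w j * w k

lemma tmap_smul {m : ℕ} (κ : ℝ) (y : Fin m → X) (c : ℝ) (w : Fin m → ℝ) :
    tmap κ y (c • w) = c ^ 2 • tmap κ y w := by
  have : ∑ l, (c • w) l • y l = c • ∑ l, w l • y l := by
    simp [Finset.smul_sum, mul_smul]
  funext j k
  simp only [tmap, this, norm_smul, mul_pow, Real.norm_eq_abs, sq_abs]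
  simp only [Pi.smul_apply, smul_eq_mul, tmap]
  split_ifs <;> ring

def dset {m : ℕ} (κ : ℝ) (y : Fin m → X) : Set (Fin m → Fin m → ℝ) :=
  {d | ∃ (N : ℕ) (F : Fin N → Fin m → ℝ), d = ∑ i, tmap κ y (F i)}

lemma dset_convex {m : ℕ} (κ : ℝ) (y : Fin m → X) : Convex ℝ (dset κ y) := by
  rintro _ ⟨N, F, rfl⟩ _ ⟨N', F', rfl⟩ a b ha hb _
  refine ⟨N + N', Fin.append (fun i => Real.sqrt a • F i) (fun i => Real.sqrt b • F' i), ?_⟩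
  rw [Fin.sum_univ_add]
  simp [tmap_smul, Finset.smul_sum, Real.sq_sqrt ha, Real.sq_sqrt hb]

lemma dset_disj {m : ℕ} (hm : 0 < m) {κ : ℝ} (hκ : 0 < κ) (y : Fin m → X)
    (h : ∀ (ι : Type) [Fintype ι] [DecidableEq ι] (F : ι → Fin m → ℝ),
      (∀ j k, ∑ i, F i j * F i k = if j = k then 1 else 0) →
      ∑ i, ‖∑ j, F i j • y j‖ ^ 2 ≤ κ) (d : Fin m → Fin m → ℝ) (hd : d ∈ dset κ y)
    (hd' : ∀ j k, |d j k - (if j = k then 1 else 0)| ≤ 1 / (2 * m)) : False := by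
  obtain ⟨N, F, rfl⟩ := hd
  set S := ∑ i, ‖∑ l, F i l • y l‖ ^ 2 with hS
  have hdv : ∀ j k, (∑ i, tmap κ y (F i)) j k =
      (if j = k then S / κ else 0) - ∑ i, F i j * F i k := by
    intro j k
    simp only [Finset.sum_apply, tmap, Finset.sum_sub_distrib, hS, Finset.sum_div]
    split_ifs <;> simp
  set μ := S / κ - 1 / 4 with hμ
  set M : Matrix (Fin m) (Fin m) ℝ := fun j k => (if j = k then μ else 0) - ∑ i, F i j * F i k with hM
  have hMd : ∀ j k, M j k = (∑ i, tmap κ y (F i)) j k - (if j = k then 1 / 4 else 0) := by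
    intro j k
    rw [hdv, hM, hμ]
    simp only
    split_ifs <;> ring
  have hquad : ∀ w : Fin m → ℝ, (1 / 4) * ∑ j, w j ^ 2 ≤ ∑ j, ∑ k, w j * M j k * w k := by
    intro w
    have h1 := quad_lower hm _ hd' w
    have h2 : ∑ j, ∑ k, w j * M j k * w k =
        ∑ j, ∑ k, w j * (∑ i, tmap κ y (F i)) j k * w k - (1 / 4) * ∑ j, w j ^ 2 := by
      simp only [hMd, mul_sub, sub_mul, Finset.sum_sub_distrib, mul_ite, ite_mul, mul_zero, zero_mul,
        Finset.sum_ite_eq, Finset.mem_univ, if_true, Finset.mul_sum]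
      congr 1
      refine Finset.sum_congr rfl fun j _ => by ring
    linarith
  obtain ⟨B, hB⟩ := psd_decomp M (fun j k => by
      simp only [hM, eq_comm (a := j), mul_comm]) (fun w => by
      have := hquad w
      have h0 : 0 ≤ ∑ j, w j ^ 2 := Finset.sum_nonneg fun _ _ => sq_nonneg _
      linarith)
  have hμ0 : 0 < μ := by
    have h1 := hquad (Pi.single ⟨0, hm⟩ 1)
    have h2 : ∑ j, ∑ k, (Pi.single ⟨0, hm⟩ 1 : Fin m → ℝ) j * M j k * (Pi.single ⟨0, hm⟩ 1 : Fin m → ℝ) k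
        = M ⟨0, hm⟩ ⟨0, hm⟩ := by
      simp [Pi.single_apply]
    have h3 : ∑ j, (Pi.single ⟨0, hm⟩ 1 : Fin m → ℝ) j ^ 2 = 1 := by
      simp [Pi.single_apply]
    rw [h2, h3] at h1
    have h4 : 0 ≤ ∑ i, F i ⟨0, hm⟩ * F i ⟨0, hm⟩ := Finset.sum_nonneg fun _ _ => mul_self_nonneg _
    simp only [hM, if_true] at h1
    linarith
  set c := (Real.sqrt μ)⁻¹ with hc
  have hc2 : c * c = μ⁻¹ := by
    rw [hc, ← mul_inv, Real.mul_self_sqrt hμ0.le]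
  have h5 := h (Fin N ⊕ Fin m) (fun i j => c * Sum.elim F B i j) (by
    intro j k
    rw [Fintype.sum_sum_type]
    simp only [Sum.elim_inl, Sum.elim_inr]
    have e1 : ∑ i, c * F i j * (c * F i k) = μ⁻¹ * ∑ i, F i j * F i k := by
      rw [Finset.mul_sum, ← hc2]
      exact Finset.sum_congr rfl fun i _ => by ring
    have e2 : ∑ i, c * B i j * (c * B i k) = μ⁻¹ * ∑ i, B i j * B i k := by
      rw [Finset.mul_sum, ← hc2]
      exact Finset.sum_congr rfl fun i _ => by ring
    rw [e1, e2, ← hB, hM, ← mul_add, add_sub_cancel]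
    split_ifs
    · exact inv_mul_cancel₀ hμ0.ne'
    · simp)
  rw [Fintype.sum_sum_type] at h5
  have h6 : ∑ i : Fin N, ‖∑ j, (c * Sum.elim F B (Sum.inl i) j) • y j‖ ^ 2 = μ⁻¹ * S := by
    rw [hS, Finset.mul_sum]
    refine Finset.sum_congr rfl fun i _ => ?_
    simp only [Sum.elim_inl, mul_smul, ← Finset.smul_sum, norm_smul, mul_pow, Real.norm_eq_abs, sq_abs]
    rw [sq c, hc2]
  have h7 : 0 ≤ ∑ i : Fin m, ‖∑ j, (c * Sum.elim F B (Sum.inr i) j) • y j‖ ^ 2 :=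
    Finset.sum_nonneg fun _ _ => sq_nonneg _
  have h8 : μ⁻¹ * S ≤ κ := by linarith
  rw [inv_mul_le_iff₀ hμ0, hμ, sub_mul, div_mul_cancel₀ _ hκ.ne'] at h8
  linarith

lemma exists_majorant {m : ℕ} (hm : 0 < m) {κ : ℝ} (hκ : 0 < κ) (y : Fin m → X)
    (h : ∀ (ι : Type) [Fintype ι] [DecidableEq ι] (F : ι → Fin m → ℝ),
      (∀ j k, ∑ i, F i j * F i k = if j = k then 1 else 0) →
      ∑ i, ‖∑ j, F i j • y j‖ ^ 2 ≤ κ) :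
    ∃ Q : Matrix (Fin m) (Fin m) ℝ, (∀ j k, Q j k = Q k j) ∧ ∑ j, Q j j = κ ∧
      ∀ w : Fin m → ℝ, ‖∑ j, w j • y j‖ ^ 2 ≤ ∑ j, ∑ k, w j * Q j k * w k := by
  set I : Fin m → Fin m → ℝ := fun j k => if j = k then 1 else 0 with hI
  have hm' : (0 : ℝ) < m := by exact_mod_cast hm
  have hr : (0 : ℝ) < 1 / (2 * m) := by positivity
  have hdisj : Disjoint (Metric.ball I (1 / (2 * m))) (dset κ y) := by
    rw [Set.disjoint_left]
    intro d hd hd2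
    refine dset_disj hm hκ y h d hd2 fun j k => ?_
    have h1 : ‖d - I‖ < 1 / (2 * m) := by rwa [← dist_eq_norm]
    have h2 := norm_le_pi_norm (d - I) j
    have h3 := norm_le_pi_norm ((d - I) j) k
    rw [Real.norm_eq_abs] at h3
    exact (h3.trans h2).trans h1.le
  obtain ⟨φ, c, hφ1, hφ2⟩ := geometric_hahn_banach_open (convex_ball I (1 / (2 * (m : ℝ))))
    Metric.isOpen_ball (dset_convex κ y) hdisj
  have hφI := hφ1 I (Metric.mem_ball_self hr)
  have hc0 : c ≤ 0 := by
    have := hφ2 0 ⟨0, Fin.elim0, by simp⟩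
    simpa using this
  have hneg : φ I < 0 := by linarith
  have hT : ∀ w, 0 ≤ φ (tmap κ y w) := by
    intro w
    by_contra! hlt
    set t := Real.sqrt ((c - 1) / φ (tmap κ y w)) with ht
    have h1 : 0 ≤ (c - 1) / φ (tmap κ y w) := div_nonneg_of_nonpos (by linarith) hlt.le
    have := hφ2 (tmap κ y (t • w)) ⟨1, fun _ => t • w, by simp⟩
    rw [tmap_smul, map_smul, ht, Real.sq_sqrt h1, smul_eq_mul, div_mul_cancel₀ _ hlt.ne] at this
    linarith
  set a : Fin m → Fin m → ℝ := fun j k => φ (Pi.single j (Pi.single k 1)) / φ I with ha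
  have hexp : ∀ d : Fin m → Fin m → ℝ, φ d / φ I = ∑ j, ∑ k, d j k * a j k := by
    intro d
    have : d = ∑ j, ∑ k, d j k • (Pi.single j (Pi.single k 1) : Fin m → Fin m → ℝ) := by
      funext j k
      simp [Finset.sum_apply, Pi.single_apply, apply_ite, ite_apply]
    conv_lhs => rw [this]
    simp only [map_sum, map_smul, smul_eq_mul, Finset.sum_div, ha, mul_div_assoc]
  refine ⟨fun j k => κ * ((a j k + a k j) / 2), fun j k => by simp only; ring, ?_, ?_⟩
  · have := hexp I
    rw [div_self hneg.ne] at this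
    simp only [hI, ite_mul, one_mul, zero_mul, Finset.sum_ite_eq, Finset.mem_univ, if_true] at this
    simp only [← Finset.mul_sum, add_self_div_two]
    rw [← this, mul_one]
  · intro w
    have e1 : tmap κ y w = (‖∑ l, w l • y l‖ ^ 2 / κ) • I - fun j k => w j * w k := by
      funext j k
      simp [tmap, hI]
    have h1 := hT w
    rw [e1, map_sub, map_smul, smul_eq_mul] at h1
    have h2 : ‖∑ l, w l • y l‖ ^ 2 / κ ≤ φ (fun j k => w j * w k) / φ I := by
      rw [le_div_iff_of_neg hneg]; linarith
    rw [hexp, div_le_iff₀ hκ] at h2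
    refine h2.trans_eq ?_
    have e3 : ∑ j, ∑ k, w j * (κ * ((a j k + a k j) / 2)) * w k =
        κ / 2 * (∑ j, ∑ k, w j * w k * a j k) + κ / 2 * (∑ j, ∑ k, w j * w k * a k j) := by
      simp only [Finset.mul_sum, ← Finset.sum_add_distrib]
      refine Finset.sum_congr rfl fun j _ => Finset.sum_congr rfl fun k _ => by ring
    have e4 : ∑ j, ∑ k, w j * w k * a k j = ∑ j, ∑ k, w j * w k * a j k := by
      rw [Finset.sum_comm]
      refine Finset.sum_congr rfl fun j _ => Finset.sum_congr rfl fun k _ => by ring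
    rw [e3, e4]; ring

lemma exists_basis {m : ℕ} {κ : ℝ} (y : Fin m → X)
    (h : ∀ (ι : Type) [Fintype ι] [DecidableEq ι] (F : ι → Fin m → ℝ),
      (∀ j k, ∑ i, F i j * F i k = if j = k then 1 else 0) →
      ∑ i, ‖∑ j, F i j • y j‖ ^ 2 ≤ κ) :
    ∃ f : Fin m → Fin m → ℝ, (∀ j k, ∑ i, f i j * f i k = if j = k then 1 else 0) ∧
      (∀ i, ∑ j, f i j ^ 2 = 1) ∧
      ∀ ψ : X →ₗ[ℝ] ℝ, (∀ x, |ψ x| ≤ ‖x‖) → ∑ i, |ψ (∑ j, f i j • y j)| ≤ Real.sqrt κ := by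
  have hid := h (Fin m) (fun i j => if i = j then 1 else 0) (by
    intro j k; simp [eq_comm])
  simp only [ite_smul, one_smul, zero_smul, Finset.sum_ite_eq, Finset.mem_univ, if_true] at hid
  by_cases hy : ∀ j, y j = 0
  · refine ⟨fun i j => if i = j then 1 else 0, fun j k => by simp [eq_comm], fun i => by simp, ?_⟩
    intro ψ _
    simp [hy]
  push Not at hy
  obtain ⟨j0, hj0⟩ := hy
  have hκ : 0 < κ := by
    have h1 : 0 < ‖y j0‖ ^ 2 := by positivity
    have h2 := Finset.single_le_sum (f := fun j => ‖y j‖ ^ 2) (fun _ _ => sq_nonneg _) (Finset.mem_univ j0)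
    linarith
  have hm : 0 < m := j0.pos
  obtain ⟨Q, hQs, hQt, hQ⟩ := exists_majorant hm hκ y h
  obtain ⟨f, q, hc, hr, hq⟩ := spectral_real Q hQs
  have hform := spectral_form Q f q hq
  have hb : ∀ i, ‖∑ j, f i j • y j‖ ^ 2 ≤ q i := by
    intro i
    have := hQ (f i)
    rw [hform] at this
    simpa [hr] using this
  have hq0 : ∀ i, 0 ≤ q i := fun i => (sq_nonneg _).trans (hb i)
  have hqs : ∑ i, q i = κ := by
    rw [← hQt]
    simp only [hq]
    rw [Finset.sum_comm]
    refine Finset.sum_congr rfl fun i _ => ?_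
    rw [← Finset.mul_sum, hr]; simp
  refine ⟨f, hc, fun i => by simpa [sq] using hr i i, ?_⟩
  intro ψ hψ
  set b : Fin m → ℝ := fun i => ψ (∑ j, f i j • y j) with hbdef
  have hbq : ∀ i, b i ^ 2 ≤ q i := by
    intro i
    refine le_trans ?_ (hb i)
    rw [← sq_abs]
    exact pow_le_pow_left₀ (abs_nonneg _) (hψ _) 2
  have hbz : ∀ i, q i = 0 → b i = 0 := by
    intro i hi
    have := hbq i
    rw [hi] at this
    exact pow_eq_zero_iff (two_ne_zero) |>.1 (le_antisymm this (sq_nonneg _))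
  set T := ∑ i, b i ^ 2 / q i with hT
  have hT0 : 0 ≤ T := Finset.sum_nonneg fun i _ => div_nonneg (sq_nonneg _) (hq0 i)
  -- test vector
  set w : Fin m → ℝ := fun j => ∑ i, (b i / q i) * f i j with hw
  have e1 : ∑ j, w j • y j = ∑ i, (b i / q i) • ∑ j, f i j • y j := by
    simp only [hw, Finset.sum_smul, Finset.smul_sum, smul_smul]
    rw [Finset.sum_comm]
  have e2 : ψ (∑ j, w j • y j) = T := by
    rw [e1, map_sum, hT]
    refine Finset.sum_congr rfl fun i _ => ?_
    rw [map_smul, smul_eq_mul]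
    change b i / q i * b i = _
    ring
  have e3 : ∀ i, ∑ j, f i j * w j = b i / q i := by
    intro i
    simp only [hw, Finset.mul_sum]
    rw [Finset.sum_comm]
    have : ∀ i', ∑ j, f i j * (b i' / q i' * f i' j) = (b i' / q i') * (if i = i' then 1 else 0) := by
      intro i'
      rw [← hr, Finset.mul_sum]
      exact Finset.sum_congr rfl fun j _ => by ring
    simp [this]
  have hTT : T ^ 2 ≤ T := by
    have h1 : T ^ 2 ≤ ‖∑ j, w j • y j‖ ^ 2 := by
      rw [← e2, ← sq_abs]
      exact pow_le_pow_left₀ (abs_nonneg _) (hψ _) 2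
    refine (h1.trans (hQ w)).trans_eq ?_
    rw [hform, hT]
    refine Finset.sum_congr rfl fun i _ => ?_
    rw [e3]
    by_cases hi : q i = 0
    · simp [hi]
    · field_simp
  have hT1 : T ≤ 1 := by nlinarith
  have hcs : (∑ i, |b i|) ^ 2 ≤ (∑ i, q i) * T := by
    refine Finset.sum_sq_le_sum_mul_sum_of_sq_le_mul _ (fun i _ => hq0 i)
      (fun i _ => div_nonneg (sq_nonneg _) (hq0 i)) fun i _ => ?_
    by_cases hi : q i = 0
    · simp [hbz i hi]
    · rw [sq_abs]; field_simp; exact le_rfl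
  rw [hqs] at hcs
  refine Real.le_sqrt_of_sq_le (hcs.trans ?_)
  nlinarith

end real5

section final
variable {𝕜 : Type*} [RCLike 𝕜] {X : Type*} [NormedAddCommGroup X] [NormedSpace 𝕜 X]

lemma weakNorm_bdd (r : ℝ) (hr : 0 < r) {m : ℕ} (x : Fin m → X) :
    BddAbove (Set.range fun φ : {φ : X →L[𝕜] 𝕜 // ‖φ‖ ≤ 1} => (∑ j, ‖φ.1 (x j)‖ ^ r) ^ (1 / r)) := by
  refine ⟨(∑ j, ‖x j‖ ^ r) ^ (1 / r), ?_⟩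
  rintro _ ⟨φ, rfl⟩
  refine Real.rpow_le_rpow (Finset.sum_nonneg fun _ _ => by positivity) ?_ (by positivity)
  refine Finset.sum_le_sum fun j _ => Real.rpow_le_rpow (norm_nonneg _) ?_ hr.le
  exact (φ.1.le_opNorm (x j)).trans (mul_le_of_le_one_left (norm_nonneg _) φ.2)

lemma le_weakNorm (r : ℝ) (hr : 0 < r) {m : ℕ} (x : Fin m → X) (φ : X →L[𝕜] 𝕜) (hφ : ‖φ‖ ≤ 1) :
    (∑ j, ‖φ (x j)‖ ^ r) ^ (1 / r) ≤ weakNorm 𝕜 r x :=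
  le_ciSup (weakNorm_bdd r hr x) (⟨φ, hφ⟩ : {φ : X →L[𝕜] 𝕜 // ‖φ‖ ≤ 1})

lemma weakNorm_nonneg (r : ℝ) {m : ℕ} (x : Fin m → X) : 0 ≤ weakNorm 𝕜 r x :=
  Real.iSup_nonneg fun _ => by positivity

lemma weakNorm_one_le {m : ℕ} (x : Fin m → X) (L : ℝ)
    (h : ∀ φ : X →L[𝕜] 𝕜, ‖φ‖ ≤ 1 → ∑ j, ‖φ (x j)‖ ≤ L) : weakNorm 𝕜 1 x ≤ L := by
  have : Nonempty {φ : X →L[𝕜] 𝕜 // ‖φ‖ ≤ 1} := ⟨⟨0, by simp⟩⟩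
  refine ciSup_le fun φ => ?_
  simpa using h φ.1 φ.2

lemma weakNorm_one_spec {m : ℕ} (x : Fin m → X) (φ : X →L[𝕜] 𝕜) (hφ : ‖φ‖ ≤ 1) :
    ∑ j, ‖φ (x j)‖ ≤ weakNorm 𝕜 1 x := by
  simpa using le_weakNorm 1 one_pos x φ hφ

lemma weakNorm_two_spec {m : ℕ} (x : Fin m → X) (φ : X →L[𝕜] 𝕜) :
    ∑ j, ‖φ (x j)‖ ^ 2 ≤ (weakNorm 𝕜 2 x * ‖φ‖) ^ 2 := by
  by_cases h0 : φ = 0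
  · simp [h0]
  have hφ : 0 < ‖φ‖ := norm_pos_iff.2 h0
  have h1 := le_weakNorm (𝕜 := 𝕜) 2 two_pos x (((‖φ‖⁻¹ : ℝ) : 𝕜) • φ) (by
    rw [norm_smul]; simp [hφ.ne'])
  rw [← Real.sqrt_eq_rpow, Real.sqrt_le_left (weakNorm_nonneg _ _)] at h1
  have h2 : ∀ j, ‖(((‖φ‖⁻¹ : ℝ) : 𝕜) • φ) (x j)‖ ^ (2 : ℝ) = (‖φ‖ ^ 2)⁻¹ * ‖φ (x j)‖ ^ 2 := by
    intro j
    rw [Real.rpow_two, smul_apply, norm_smul, mul_pow]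
    simp
  simp only [h2, ← Finset.mul_sum] at h1
  rw [inv_mul_le_iff₀ (by positivity)] at h1
  rw [mul_pow]; linarith

lemma gt_uniform (h : IsGTSpace 𝕜 X) :
    ∃ C > 0, ∀ (u : X →L[𝕜] lp (fun _ : ℕ => 𝕜) 2) (m : ℕ) (x : Fin m → X) (L : ℝ), 0 < L →
      weakNorm 𝕜 1 x ≤ L → ∑ j, ‖u (x j)‖ ≤ C * ‖u‖ * L := by
  set H := lp (fun _ : ℕ => 𝕜) 2
  let J := Σ m : ℕ, {p : (Fin m → X) × (Fin m → (H →L[𝕜] 𝕜)) // weakNorm 𝕜 1 p.1 ≤ 1 ∧ ∀ i, ‖p.2 i‖ ≤ 1}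
  let g : J → ((X →L[𝕜] H) →L[𝕜] 𝕜) := fun p =>
    ∑ i, (p.2.1.2 i).comp (ContinuousLinearMap.apply 𝕜 H (p.2.1.1 i))
  have hg : ∀ (p : J) (u : X →L[𝕜] H), g p u = ∑ i, p.2.1.2 i (u (p.2.1.1 i)) := by
    intro p u
    simp [g]
  obtain ⟨C, hC⟩ := banach_steinhaus (g := g) (by
    intro u
    obtain ⟨C, hC0, hC⟩ := h u
    refine ⟨C, ?_⟩
    rintro ⟨m, ⟨x, φ⟩, hx, hφ⟩
    rw [hg]
    refine (norm_sum_le _ _).trans ?_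
    calc ∑ i, ‖φ i (u (x i))‖ ≤ ∑ i, ‖u (x i)‖ := Finset.sum_le_sum fun i _ =>
          ((φ i).le_opNorm _).trans (mul_le_of_le_one_left (norm_nonneg _) (hφ i))
      _ ≤ C * weakNorm 𝕜 1 x := hC m x
      _ ≤ C * 1 := by gcongr
      _ = C := mul_one C)
  refine ⟨max C 1, by positivity, fun u m x L hL hx => ?_⟩
  choose φ hφ1 hφ2 using fun i => exists_dual_vector'' 𝕜 (u (x i))
  have hLn : ‖(((L⁻¹ : ℝ)) : 𝕜)‖ = L⁻¹ := by
    rw [RCLike.norm_ofReal, abs_of_pos (by positivity)]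
  have hp : weakNorm 𝕜 1 (fun i => (((L⁻¹ : ℝ)) : 𝕜) • x i) ≤ 1 := by
    refine weakNorm_one_le _ _ fun ψ hψ => ?_
    simp only [map_smul, norm_smul, hLn, ← Finset.mul_sum]
    rw [inv_mul_le_iff₀ hL, mul_one]
    exact (weakNorm_one_spec x ψ hψ).trans hx
  let p : J := ⟨m, ⟨(fun i => (((L⁻¹ : ℝ)) : 𝕜) • x i, φ), hp, hφ1⟩⟩
  have h1 := (g p).le_of_opNorm_le (hC p) u
  have h2 : g p u = ((L⁻¹ * ∑ i, ‖u (x i)‖ : ℝ) : 𝕜) := by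
    rw [hg]
    simp only [p, map_smul, smul_eq_mul, hφ2, ← Finset.mul_sum]
    push_cast
    rfl
  rw [h2, RCLike.norm_ofReal, abs_of_nonneg (by positivity), inv_mul_le_iff₀ hL] at h1
  calc _ ≤ L * (C * ‖u‖) := h1
    _ ≤ L * (max C 1 * ‖u‖) := by gcongr; exact le_max_left _ _
    _ = _ := by ring

end final

section core
variable {𝕜 : Type*} [RCLike 𝕜] {E : Type*} [NormedAddCommGroup E] [NormedSpace 𝕜 E]

lemma norm_le_re_im (a : 𝕜) : ‖a‖ ≤ |RCLike.re a| + |RCLike.im a| := by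
  refine abs_le_of_sq_le_sq' ?_ (by positivity) |>.2
  rw [← RCLike.normSq_eq_def', RCLike.normSq_apply]
  have h1 := abs_mul_abs_self (RCLike.re a)
  have h2 := abs_mul_abs_self (RCLike.im a)
  have h3 := mul_nonneg (abs_nonneg (RCLike.re a)) (abs_nonneg (RCLike.im a))
  nlinarith

lemma exists_op {m : ℕ} (z : Fin m → E) :
    ∃ u : (E →L[𝕜] 𝕜) →L[𝕜] lp (fun _ : ℕ => 𝕜) 2, (∀ x, ‖u x‖ ^ 2 = ∑ j, ‖x (z j)‖ ^ 2) ∧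
      ‖u‖ ≤ weakNorm 𝕜 2 z := by
  have key : ∀ x : E →L[𝕜] 𝕜, ‖(∑ j : Fin m, (ContinuousLinearMap.apply 𝕜 𝕜 (z j)).smulRight
      (lp.single 2 (j : ℕ) (1 : 𝕜) : lp (fun _ : ℕ => 𝕜) 2)) x‖ ^ 2 = ∑ j, ‖x (z j)‖ ^ 2 := by
    intro x
    set F : ℕ → 𝕜 := fun k => if h : k < m then x (z ⟨k, h⟩) else 0 with hF
    have h1 := lp.norm_sum_single (E := fun _ : ℕ => 𝕜) (p := 2) (by norm_num) F (Finset.range m)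
    rw [Finset.sum_range, Finset.sum_range] at h1
    have h2 : ∀ j : Fin m, F j = x (z j) := by
      intro j; simp [hF]
    simp only [h2, ENNReal.toReal_ofNat, Real.rpow_two] at h1
    rw [← h1]
    congr 2
    rw [ContinuousLinearMap.sum_apply]
    refine Finset.sum_congr rfl fun j _ => ?_
    rw [ContinuousLinearMap.smulRight_apply, ContinuousLinearMap.apply_apply, ← lp.single_smul]
    simp
  refine ⟨_, key, ?_⟩
  refine ContinuousLinearMap.opNorm_le_bound _ (weakNorm_nonneg _ _) fun x => ?_
  refine (pow_le_pow_iff_left₀ (norm_nonneg _) (mul_nonneg (weakNorm_nonneg _ _) (norm_nonneg _)) two_ne_zero).1 ?_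
  rw [key]
  exact weakNorm_two_spec z x

lemma core_bound (hGT : IsGTSpace 𝕜 (E →L[𝕜] 𝕜)) (hcot : HasCotype2 (E →L[𝕜] 𝕜)) :
    ∃ K > 0, ∀ (m : ℕ) (y : Fin m → (E →L[𝕜] 𝕜)) (z : Fin m → E),
      ∑ j, ‖y j (z j)‖ ≤ K * radNorm y * weakNorm 𝕜 2 z := by
  obtain ⟨C, hC0, hC⟩ := cotype_sq hcot
  obtain ⟨G, hG0, hG⟩ := gt_uniform hGT
  refine ⟨G * (16 * C), by positivity, fun m y z => ?_⟩
  obtain ⟨f, hf1, hf2, hf3⟩ := exists_basis (κ := 64 * C ^ 2 * radSq y) y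
    (fun ι _ _ F hF => frame_bound hC0 hC F hF y)
  have hκ : Real.sqrt (64 * C ^ 2 * radSq y) = 8 * C * radNorm y := by
    rw [radNorm_eq, show 64 * C ^ 2 * radSq y = (8 * C) ^ 2 * radSq y by ring,
      Real.sqrt_mul (by positivity), Real.sqrt_sq (by positivity)]
  rw [hκ] at hf3
  obtain ⟨u, hu, hun⟩ := exists_op (𝕜 := 𝕜) z
  set x : Fin m → (E →L[𝕜] 𝕜) := fun i => ∑ j, f i j • y j with hx
  have hsm : ∀ (η : (E →L[𝕜] 𝕜) →L[𝕜] 𝕜) (r : ℝ) (v : E →L[𝕜] 𝕜), η (r • v) = r • η v := by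
    intro η r v
    have : r • v = (r : 𝕜) • v := by
      ext e
      simp [RCLike.real_smul_eq_coe_mul]
    rw [this, map_smul, RCLike.real_smul_eq_coe_mul, smul_eq_mul]
  have hweak : weakNorm 𝕜 1 x ≤ 16 * C * radNorm y := by
    refine weakNorm_one_le _ _ fun η hη => ?_
    have hb : ∀ v, ‖η v‖ ≤ ‖v‖ := fun v =>
      (η.le_opNorm v).trans (mul_le_of_le_one_left (norm_nonneg _) hη)
    have h1 := hf3 { toFun := fun v => RCLike.re (η v)
                     map_add' := fun a b => by simp
                     map_smul' := fun r v => by simp [hsm, RCLike.smul_re] }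
      (fun v => (RCLike.abs_re_le_norm _).trans (hb v))
    have h2 := hf3 { toFun := fun v => RCLike.im (η v)
                     map_add' := fun a b => by simp
                     map_smul' := fun r v => by simp [hsm, RCLike.smul_im] }
      (fun v => (RCLike.abs_im_le_norm _).trans (hb v))
    simp only [LinearMap.coe_mk, AddHom.coe_mk] at h1 h2
    calc ∑ i, ‖η (x i)‖ ≤ ∑ i, (|RCLike.re (η (x i))| + |RCLike.im (η (x i))|) :=
          Finset.sum_le_sum fun i _ => norm_le_re_im _
      _ = ∑ i, |RCLike.re (η (x i))| + ∑ i, |RCLike.im (η (x i))| := Finset.sum_add_distrib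
      _ ≤ 8 * C * radNorm y + 8 * C * radNorm y := add_le_add h1 h2
      _ = _ := by ring
  have hrad0 : 0 ≤ radNorm y := by rw [radNorm_eq]; positivity
  have hw0 := weakNorm_nonneg (𝕜 := 𝕜) 2 z
  have hy : ∀ k, y k = ∑ i, f i k • x i := by
    intro k
    simp only [hx, Finset.smul_sum, smul_smul]
    rw [Finset.sum_comm]
    simp only [← Finset.sum_smul, hf1]
    simp
  have hmain : ∑ j, ‖y j (z j)‖ ≤ ∑ i, ‖u (x i)‖ := by
    calc ∑ j, ‖y j (z j)‖ ≤ ∑ j, ∑ i, |f i j| * ‖x i (z j)‖ := by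
          refine Finset.sum_le_sum fun j _ => ?_
          conv_lhs => rw [hy j]
          rw [ContinuousLinearMap.sum_apply]
          refine (norm_sum_le _ _).trans_eq ?_
          refine Finset.sum_congr rfl fun i _ => ?_
          rw [smul_apply, norm_smul, Real.norm_eq_abs]
      _ = ∑ i, ∑ j, |f i j| * ‖x i (z j)‖ := Finset.sum_comm
      _ ≤ ∑ i, ‖u (x i)‖ := by
          refine Finset.sum_le_sum fun i _ => ?_
          refine (abs_le_of_sq_le_sq' ?_ (norm_nonneg _)).2
          refine (Finset.sum_mul_sq_le_sq_mul_sq _ _ _).trans_eq ?_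
          simp only [sq_abs, hf2, one_mul, hu]
  refine hmain.trans (le_of_forall_pos_le_add fun ε hε => ?_)
  set a := G * weakNorm 𝕜 2 z with ha
  have ha0 : 0 ≤ a := by positivity
  have h1 := hG u m x (16 * C * radNorm y + ε / (a + 1)) (by positivity)
    (hweak.trans (le_add_of_nonneg_right (by positivity)))
  have h2 : G * ‖u‖ * (16 * C * radNorm y + ε / (a + 1)) ≤ a * (16 * C * radNorm y + ε / (a + 1)) := by
    gcongr
    exact mul_le_mul_of_nonneg_left hun hG0.le
  have h3 : a * (ε / (a + 1)) ≤ ε := by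
    rw [← mul_div_assoc, div_le_iff₀ (by positivity)]
    nlinarith
  calc _ ≤ a * (16 * C * radNorm y + ε / (a + 1)) := h1.trans h2
    _ = G * (16 * C) * radNorm y * weakNorm 𝕜 2 z + a * (ε / (a + 1)) := by rw [ha]; ring
    _ ≤ _ := by linarith

end core

/-- If the dual of the last space is a GT-space of cotype 2 and the associated `n`-linear map
`A_n` into that dual (characterized by `B v y = A (v, y)`) is almost summing, then the
`(n+1)`-linear form `A` is absolutely `(1; 2, …, 2)`-summing. -/
theorem almost_summing_implies_summing {𝕜 : Type*} [RCLike 𝕜] {n : ℕ} (hn : 1 ≤ n)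
    (E : Fin (n + 1) → Type*) [∀ i, NormedAddCommGroup (E i)] [∀ i, NormedSpace 𝕜 (E i)]
    [∀ i, CompleteSpace (E i)]
    (A : ContinuousMultilinearMap 𝕜 E 𝕜)
    (B : ContinuousMultilinearMap 𝕜 (fun i : Fin n => E i.castSucc)
      (E (Fin.last n) →L[𝕜] 𝕜))
    (hAB : ∀ (v : ∀ i : Fin n, E i.castSucc) (y : E (Fin.last n)), B v y = A (Fin.snoc v y))
    (hGT : IsGTSpace 𝕜 (E (Fin.last n) →L[𝕜] 𝕜))
    (hcot : HasCotype2 (E (Fin.last n) →L[𝕜] 𝕜))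
    (hB : ∃ C > 0, ∀ (m : ℕ) (x : ∀ i : Fin n, Fin m → E i.castSucc),
      radNorm (fun j => B (fun i => x i j)) ≤ C * ∏ i, weakNorm 𝕜 2 (x i)) :
    ∃ C > 0, ∀ (m : ℕ) (x : ∀ i, Fin m → E i),
      ∑ j, ‖A (fun i => x i j)‖ ≤ C * ∏ i, weakNorm 𝕜 2 (x i) := by
  obtain ⟨K, hK0, hK⟩ := core_bound hGT hcot
  obtain ⟨C, hC0, hC⟩ := hB
  refine ⟨K * C, by positivity, fun m x => ?_⟩
  have h1 := hK m (fun j => B (fun i => x i.castSucc j)) (x (Fin.last n))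
  have h2 : ∀ j, B (fun i => x i.castSucc j) (x (Fin.last n) j) = A (fun i => x i j) := by
    intro j
    rw [hAB]
    congr 1
    exact Fin.snoc_init_self (fun i => x i j)
  simp only [h2] at h1
  refine h1.trans ?_
  rw [Fin.prod_univ_castSucc]
  calc _ ≤ K * (C * ∏ i : Fin n, weakNorm 𝕜 2 (x i.castSucc)) * weakNorm 𝕜 2 (x (Fin.last n)) := by
        refine mul_le_mul_of_nonneg_right ?_ (weakNorm_nonneg _ _)
        exact mul_le_mul_of_nonneg_left (hC m fun i => x i.castSucc) hK0.le
    _ = _ := by ring
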